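/- Let D ⊆ ℂ be open, let x₀, α : D → ℂ be holomorphic, let Ω ⊆ ℂ² be an open set containing the graph {(x₀(y), y) : y ∈ D}, and let ũ, ψ̃ : Ω → ℂ be holomorphic. For (x,y) ∈ Ω with x ≠ x₀(y), define u(x,y) := 2/(x − x₀(y))² + ũ(x,y) and ψ(x,y) := α(y)/(x − x₀(y)) + ψ̃(x,y), and assume ∂_yψ − ∂_x²ψ + uψ = 0 holds at all such points. Set w(y) := ∂_xũ(x₀(y), y). Then α(y)·(x₀''(y) − 2w(y)) = 0 for all y ∈ D; in particular x₀''(y) = 2w(y) at every y ∈ D with α(y) ≠ 0. -/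

import Mathlib

/-- Partial derivative in the first (x) variable of a function on ℂ². -/
noncomputable def pdx (f : ℂ × ℂ → ℂ) : ℂ × ℂ → ℂ :=
  fun q => deriv (fun x => f (x, q.2)) q.1

/-- Partial derivative in the second (y) variable of a function on ℂ². -/
noncomputable def pdy (f : ℂ × ℂ → ℂ) : ℂ × ℂ → ℂ :=
  fun q => deriv (fun y => f (q.1, y)) q.2

/-- The meromorphic solution `ψ = α(y)/(x − x₀(y)) + ψ̃(x,y)`. -/
noncomputable def psiPole (x₀ α : ℂ → ℂ) (ψt : ℂ × ℂ → ℂ) : ℂ × ℂ → ℂ :=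
  fun q => α q.2 / (q.1 - x₀ q.2) + ψt q

/-- The potential `u = 2/(x − x₀(y))² + ũ(x,y)`. -/
noncomputable def uPole (x₀ : ℂ → ℂ) (ut : ℂ × ℂ → ℂ) : ℂ × ℂ → ℂ :=
  fun q => 2 / (q.1 - x₀ q.2) ^ 2 + ut q

/-!
Multiplying the equation by `(x - x₀ y) ^ 2` turns it into
`a + (x - x₀) b + (x - x₀) ^ 2 k = 0` with `a = α x₀' + 2 ψ̃`, `b = α' + α ũ` and
`k = ∂_yψ̃ - ∂_x²ψ̃ + ũ ψ̃`. Its first three Taylor coefficients at `x = x₀(y)` vanish; in the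
third one the contributions of `∂_x²ψ̃` cancel. Differentiating the vanishing of the first
coefficient along the graph `x = x₀(y)` and eliminating the values and first derivatives of `ψ̃`
with the other two leaves `α (x₀'' - 2w) = 0`.
-/

open Filter Topology

theorem apply_eq_of_eventually_nhdsNE_eq {X Y : Type*} [TopologicalSpace X] [TopologicalSpace Y]
    [T2Space Y] {f : X → Y} {c : X} {y : Y} [NeBot (𝓝[≠] c)] (hf : ContinuousAt f c)
    (h : ∀ᶠ x in 𝓝[≠] c, f x = y) : f c = y :=
  tendsto_nhds_unique_of_eventuallyEq (hf.mono_left nhdsWithin_le_nhds) tendsto_const_nhds h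

section TaylorCoefficients

variable {𝕜 E : Type*} [NontriviallyNormedField 𝕜] [NormedAddCommGroup E] [NormedSpace 𝕜 E]
  {a b k : 𝕜 → E} {c : 𝕜}

theorem eq_zero_and_eventually_dslope_add_eq_zero (ha : ContinuousAt a c) (hk : ContinuousAt k c)
    (h : ∀ᶠ x in 𝓝[≠] c, a x + (x - c) • k x = 0) :
    a c = 0 ∧ ∀ᶠ x in 𝓝[≠] c, dslope a c x + k x = 0 := by
  have hcont : ContinuousAt (fun x => a x + (x - c) • k x) c := by fun_prop
  have hac : a c = 0 := by simpa using apply_eq_of_eventually_nhdsNE_eq hcont h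
  refine ⟨hac, ?_⟩
  filter_upwards [h, self_mem_nhdsWithin] with x hx hne
  refine (smul_eq_zero.1 ?_).resolve_left (sub_ne_zero.2 hne)
  rw [smul_add, sub_smul_dslope_of_zero hac, hx]

theorem analyticAt_dslope_self (ha : AnalyticAt 𝕜 a c) : AnalyticAt 𝕜 (dslope a c) c :=
  let ⟨_, hp⟩ := ha
  ⟨_, hp.has_fpower_series_dslope_fslope⟩

theorem deriv_deriv_eq_two_smul_deriv_dslope [CompleteSpace E] (ha : AnalyticAt 𝕜 a c) :
    deriv (deriv a) c = (2 : 𝕜) • deriv (dslope a c) c := by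
  have hs := analyticAt_dslope_self ha
  have hsmul : a = fun x => a c + (x - c) • dslope a c x := by
    funext x
    rw [sub_smul_dslope, add_sub_cancel]
  have hderiv : deriv a =ᶠ[𝓝 c] fun x => dslope a c x + (x - c) • deriv (dslope a c) x := by
    filter_upwards [hs.eventually_analyticAt] with x hx
    have h := (((hasDerivAt_id x).sub_const c).fun_smul
      hx.differentiableAt.hasDerivAt).const_add (a c)
    conv_lhs => rw [hsmul]
    simpa [add_comm] using h.deriv
  have h := hs.differentiableAt.hasDerivAt.fun_add
    (((hasDerivAt_id c).sub_const c).fun_smul hs.deriv.differentiableAt.hasDerivAt)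
  rw [hderiv.deriv_eq, two_smul]
  simpa using h.deriv

theorem taylor_coeffs_eq_zero [CompleteSpace E] (ha : AnalyticAt 𝕜 a c)
    (hb : DifferentiableAt 𝕜 b c) (hk : ContinuousAt k c)
    (h : ∀ᶠ x in 𝓝[≠] c, a x + (x - c) • b x + (x - c) ^ 2 • k x = 0) :
    a c = 0 ∧ deriv a c + b c = 0 ∧
      deriv (deriv a) c + (2 : 𝕜) • (deriv b c + k c) = 0 := by
  have hs := (analyticAt_dslope_self ha).differentiableAt
  have hsb : DifferentiableAt 𝕜 (fun x => dslope a c x + b x) c := hs.add hb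
  have hb_cont := hb.continuousAt
  obtain ⟨h₀, hdiv⟩ := eq_zero_and_eventually_dslope_add_eq_zero
    (k := fun x => b x + (x - c) • k x) ha.continuousAt (by fun_prop)
    (h.mono fun x hx => by rw [← hx]; module)
  obtain ⟨h₁, hdiv'⟩ := eq_zero_and_eventually_dslope_add_eq_zero hsb.continuousAt hk
    (hdiv.mono fun x hx => by rw [← hx]; module)
  have h₂ := apply_eq_of_eventually_nhdsNE_eq
    ((continuousAt_dslope_same.2 hsb).fun_add hk) hdiv'
  rw [dslope_same, deriv_fun_add hs hb] at h₂
  refine ⟨h₀, by simpa using h₁, ?_⟩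
  rw [deriv_deriv_eq_two_smul_deriv_dslope ha, ← smul_add, ← add_assoc, h₂, smul_zero]

end TaylorCoefficients

theorem continuousAt_deriv_snd {X E : Type*} [TopologicalSpace X] [NormedAddCommGroup E]
    [NormedSpace ℂ E] [CompleteSpace E] {f : X × ℂ → E} {U : Set (X × ℂ)} {c : X} {y : ℂ}
    (hU : U ∈ 𝓝 (c, y)) (hcont : ContinuousOn f U)
    (hdiff : ∀ q ∈ U, DifferentiableAt ℂ (fun z => f (q.1, z)) q.2) :
    ContinuousAt (fun x => deriv (fun z => f (x, z)) y) c := by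
  obtain ⟨V, hV, W, hW, hVW⟩ := mem_nhds_prod_iff.1 hU
  obtain ⟨r, hr, hrW⟩ := Metric.nhds_basis_closedBall.mem_iff.1 hW
  have hsub : V ×ˢ Metric.closedBall y r ⊆ U := (Set.prod_mono_right hrW).trans hVW
  have hunif : TendstoUniformlyOn (fun x z => f (x, z)) (fun z => f (c, z)) (𝓝 c)
      (Metric.closedBall y r) := by
    intro u hu
    obtain ⟨v, hv, hvu⟩ := (isCompact_closedBall y r).mem_uniformity_of_prod
      (f := fun x z => f (x, z)) (hcont.mono hsub) (mem_of_mem_nhds hV) (symm_le_uniformity hu)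
    rw [nhdsWithin_eq_nhds.2 hV] at hv
    filter_upwards [hv] with x hx z hz using hvu x hx z hz
  have hloc := (hunif.mono Metric.ball_subset_closedBall).tendstoLocallyUniformlyOn
  refine (hloc.deriv ?_ Metric.isOpen_ball).tendsto_at (Metric.mem_ball_self hr)
  filter_upwards [hV] with x hx z hz
  exact (hdiff (x, z) (hsub ⟨hx, Metric.ball_subset_closedBall hz⟩)).differentiableWithinAt

section Slices

variable {𝕜 E F G : Type*} [NontriviallyNormedField 𝕜]
  [NormedAddCommGroup E] [NormedSpace 𝕜 E] [NormedAddCommGroup F] [NormedSpace 𝕜 F]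
  [NormedAddCommGroup G] [NormedSpace 𝕜 G] {f : E × F → G} {x : E} {y : F}

theorem differentiableAt_slice_fst (hf : DifferentiableAt 𝕜 f (x, y)) :
    DifferentiableAt 𝕜 (fun z => f (z, y)) x :=
  hf.comp x (by fun_prop : DifferentiableAt 𝕜 (fun z => (z, y)) x)

theorem differentiableAt_slice_snd (hf : DifferentiableAt 𝕜 f (x, y)) :
    DifferentiableAt 𝕜 (fun z => f (x, z)) y :=
  hf.comp y (by fun_prop : DifferentiableAt 𝕜 (fun z => (x, z)) y)

theorem analyticAt_slice_fst {F G : Type*} [NormedAddCommGroup F] [NormedSpace ℂ F]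
    [NormedAddCommGroup G] [NormedSpace ℂ G] [CompleteSpace G] {f : ℂ × F → G} {x : ℂ} {y : F}
    (hf : ∀ᶠ q in 𝓝 (x, y), DifferentiableAt ℂ f q) : AnalyticAt ℂ (fun z => f (z, y)) x :=
  Complex.analyticAt_iff_eventually_differentiableAt.2 <|
    ((by fun_prop : Continuous fun z => (z, y)).continuousAt.eventually hf).mono
      fun _ => differentiableAt_slice_fst

end Slices

section PartialDerivatives

variable {f : ℂ × ℂ → ℂ} {x y : ℂ}

theorem continuousAt_pdy_fst (hf : ∀ᶠ q in 𝓝 (x, y), DifferentiableAt ℂ f q) :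
    ContinuousAt (fun z => pdy f (z, y)) x :=
  continuousAt_deriv_snd hf (fun _ hq => hq.continuousAt.continuousWithinAt)
    fun _ hq => differentiableAt_slice_snd hq

theorem hasDerivAt_comp_prodMk {g h : ℂ → ℂ} {g' h' t : ℂ}
    (hf : DifferentiableAt ℂ f (g t, h t)) (hg : HasDerivAt g g' t) (hh : HasDerivAt h h' t) :
    HasDerivAt (fun s => f (g s, h s)) (pdx f (g t, h t) * g' + pdy f (g t, h t) * h') t := by
  have hF := hf.hasFDerivAt
  have hx : pdx f (g t, h t) = fderiv ℂ f (g t, h t) (1, 0) :=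
    (hF.comp_hasDerivAt (g t) ((hasDerivAt_id _).prodMk (hasDerivAt_const _ (h t)))).deriv
  have hy : pdy f (g t, h t) = fderiv ℂ f (g t, h t) (0, 1) :=
    (hF.comp_hasDerivAt (h t) ((hasDerivAt_const _ (g t)).prodMk (hasDerivAt_id _))).deriv
  have hdecomp : (g', h') = g' • ((1 : ℂ), (0 : ℂ)) + h' • ((0 : ℂ), (1 : ℂ)) := by simp
  refine (hF.comp_hasDerivAt (f := fun s => (g s, h s)) t (hg.prodMk hh)).congr_deriv ?_
  rw [hdecomp, map_add, map_smul, map_smul, ← hx, ← hy, smul_eq_mul, smul_eq_mul, mul_comm g',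
    mul_comm h']

end PartialDerivatives

section SimplePole

variable {x₀ α : ℂ → ℂ} {ut ψt : ℂ × ℂ → ℂ} {x y : ℂ}

theorem pdy_psiPole (hx₀ : DifferentiableAt ℂ x₀ y) (hα : DifferentiableAt ℂ α y)
    (hψt : DifferentiableAt ℂ (fun z => ψt (x, z)) y) (hne : x ≠ x₀ y) :
    pdy (psiPole x₀ α ψt) (x, y) =
      deriv α y / (x - x₀ y) + α y * deriv x₀ y / (x - x₀ y) ^ 2 + pdy ψt (x, y) := by
  have hs : x - x₀ y ≠ 0 := sub_ne_zero.2 hne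
  have hpole : HasDerivAt (fun z => α z / (x - x₀ z))
      (deriv α y / (x - x₀ y) + α y * deriv x₀ y / (x - x₀ y) ^ 2) y :=
    (hα.hasDerivAt.fun_div (hx₀.hasDerivAt.const_sub x) hs).congr_deriv (by field_simp; ring)
  exact (hpole.fun_add hψt.hasDerivAt).deriv

theorem pdx_psiPole (hψt : DifferentiableAt ℂ (fun z => ψt (z, y)) x) (hne : x ≠ x₀ y) :
    pdx (psiPole x₀ α ψt) (x, y) = -α y / (x - x₀ y) ^ 2 + pdx ψt (x, y) := by
  have hpole : HasDerivAt (fun z => α y / (z - x₀ y)) (-α y / (x - x₀ y) ^ 2) x :=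
    ((hasDerivAt_const x (α y)).fun_div ((hasDerivAt_id' x).sub_const (x₀ y))
      (sub_ne_zero.2 hne)).congr_deriv (by ring)
  exact (hpole.fun_add hψt.hasDerivAt).deriv

theorem pdx_pdx_psiPole (hψt : AnalyticAt ℂ (fun z => ψt (z, y)) x) (hne : x ≠ x₀ y) :
    pdx (pdx (psiPole x₀ α ψt)) (x, y) =
      2 * α y / (x - x₀ y) ^ 3 + pdx (pdx ψt) (x, y) := by
  have hs : x - x₀ y ≠ 0 := sub_ne_zero.2 hne
  have hpdx : (fun z => pdx (psiPole x₀ α ψt) (z, y)) =ᶠ[𝓝 x]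
      fun z => -α y / (z - x₀ y) ^ 2 + pdx ψt (z, y) := by
    filter_upwards [hψt.eventually_analyticAt, isOpen_ne.mem_nhds hne] with z hz hzne
      using pdx_psiPole hz.differentiableAt hzne
  have hpole : HasDerivAt (fun z => -α y / (z - x₀ y) ^ 2) (2 * α y / (x - x₀ y) ^ 3) x :=
    ((hasDerivAt_const x (-α y)).fun_div (((hasDerivAt_id' x).sub_const (x₀ y)).fun_pow 2)
      (pow_ne_zero 2 hs)).congr_deriv (by field_simp; ring)
  exact hpdx.deriv_eq.trans (hpole.fun_add hψt.deriv.differentiableAt.hasDerivAt).deriv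

theorem sub_sq_mul_linearEquation_psiPole (hx₀ : DifferentiableAt ℂ x₀ y)
    (hα : DifferentiableAt ℂ α y) (hψt : ∀ᶠ q in 𝓝 (x, y), DifferentiableAt ℂ ψt q)
    (hne : x ≠ x₀ y) :
    (x - x₀ y) ^ 2 * (pdy (psiPole x₀ α ψt) (x, y) - pdx (pdx (psiPole x₀ α ψt)) (x, y)
        + uPole x₀ ut (x, y) * psiPole x₀ α ψt (x, y)) =
      (α y * deriv x₀ y + 2 * ψt (x, y)) + (x - x₀ y) * (deriv α y + α y * ut (x, y))
        + (x - x₀ y) ^ 2 * (pdy ψt (x, y) - pdx (pdx ψt) (x, y) + ut (x, y) * ψt (x, y)) := by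
  have hs : x - x₀ y ≠ 0 := sub_ne_zero.2 hne
  rw [pdy_psiPole hx₀ hα (differentiableAt_slice_snd hψt.self_of_nhds) hne,
    pdx_pdx_psiPole (analyticAt_slice_fst hψt) hne]
  simp only [uPole, psiPole]
  field_simp
  ring

theorem linearEquation_laurent_coeffs_eq_zero (hx₀ : DifferentiableAt ℂ x₀ y)
    (hα : DifferentiableAt ℂ α y) (hut : DifferentiableAt ℂ (fun x => ut (x, y)) (x₀ y))
    (hψt : ∀ᶠ q in 𝓝 (x₀ y, y), DifferentiableAt ℂ ψt q)
    (heq : ∀ᶠ x in 𝓝[≠] x₀ y,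
      pdy (psiPole x₀ α ψt) (x, y) - pdx (pdx (psiPole x₀ α ψt)) (x, y)
        + uPole x₀ ut (x, y) * psiPole x₀ α ψt (x, y) = 0) :
    α y * deriv x₀ y + 2 * ψt (x₀ y, y) = 0 ∧
      2 * pdx ψt (x₀ y, y) + (deriv α y + α y * ut (x₀ y, y)) = 0 ∧
      α y * pdx ut (x₀ y, y) + pdy ψt (x₀ y, y) + ut (x₀ y, y) * ψt (x₀ y, y) = 0 := by
  have hψ : AnalyticAt ℂ (fun x => ψt (x, y)) (x₀ y) := analyticAt_slice_fst hψt
  have hk : ContinuousAt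
      (fun x => pdy ψt (x, y) - pdx (pdx ψt) (x, y) + ut (x, y) * ψt (x, y)) (x₀ y) :=
    ((continuousAt_pdy_fst hψt).sub hψ.deriv.deriv.continuousAt).add
      (hut.continuousAt.mul hψ.continuousAt)
  have hslice : ContinuousAt (fun x => (x, y)) (x₀ y) := by fun_prop
  have hexpand : ∀ᶠ x in 𝓝[≠] x₀ y,
      (α y * deriv x₀ y + 2 * ψt (x, y)) + (x - x₀ y) * (deriv α y + α y * ut (x, y))
        + (x - x₀ y) ^ 2 * (pdy ψt (x, y) - pdx (pdx ψt) (x, y) + ut (x, y) * ψt (x, y)) = 0 := by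
    filter_upwards [heq, nhdsWithin_le_nhds (hslice.eventually hψt.eventually_nhds),
      self_mem_nhdsWithin] with x hx hψx hne
    rw [← sub_sq_mul_linearEquation_psiPole hx₀ hα hψx hne, hx, mul_zero]
  have ha' : deriv (fun x => α y * deriv x₀ y + 2 * ψt (x, y)) =
      fun x => 2 * pdx ψt (x, y) := by
    funext x
    rw [deriv_const_add, deriv_const_mul_field, pdx]
  have hb' : deriv (fun x => deriv α y + α y * ut (x, y)) (x₀ y) = α y * pdx ut (x₀ y, y) := by
    rw [deriv_const_add, deriv_const_mul_field, pdx]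
  have ha'' : deriv (fun x => 2 * pdx ψt (x, y)) (x₀ y) = 2 * pdx (pdx ψt) (x₀ y, y) := by
    rw [deriv_const_mul_field, pdx]
  obtain ⟨h₀, h₁, h₂⟩ := taylor_coeffs_eq_zero
    (analyticAt_const.fun_add (analyticAt_const.fun_mul hψ))
    ((hut.const_mul _).const_add _) hk hexpand
  rw [ha', ha'', hb', smul_eq_mul] at h₂
  rw [ha'] at h₁
  exact ⟨h₀, h₁, by linear_combination h₂ / 2⟩

theorem deriv_leadingCoeff_eq_zero (hx₀ : DifferentiableAt ℂ x₀ y)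
    (hx₀' : DifferentiableAt ℂ (deriv x₀) y) (hα : DifferentiableAt ℂ α y)
    (hψt : DifferentiableAt ℂ ψt (x₀ y, y))
    (h : ∀ᶠ z in 𝓝 y, α z * deriv x₀ z + 2 * ψt (x₀ z, z) = 0) :
    deriv α y * deriv x₀ y + α y * deriv (deriv x₀) y
      + 2 * (pdx ψt (x₀ y, y) * deriv x₀ y + pdy ψt (x₀ y, y)) = 0 := by
  have hψ_graph := hasDerivAt_comp_prodMk hψt hx₀.hasDerivAt (hasDerivAt_id' y)
  have hderiv := (hα.hasDerivAt.fun_mul hx₀'.hasDerivAt).fun_add (hψ_graph.const_mul 2)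
  have hzero := hderiv.unique ((hasDerivAt_const y (0 : ℂ)).congr_of_eventuallyEq h)
  rwa [mul_one] at hzero

end SimplePole

theorem stmt_7_general (D : Set ℂ) (hD : IsOpen D)
    (x₀ α : ℂ → ℂ) (hx₀ : DifferentiableOn ℂ x₀ D) (hα : DifferentiableOn ℂ α D)
    (Ω : Set (ℂ × ℂ)) (hΩ : IsOpen Ω)
    (hgraph : ∀ y ∈ D, ((x₀ y, y) : ℂ × ℂ) ∈ Ω)
    (ut ψt : ℂ × ℂ → ℂ)
    (hut : ∀ y ∈ D, DifferentiableAt ℂ (fun x => ut (x, y)) (x₀ y))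
    (hψt : DifferentiableOn ℂ ψt Ω)
    (heq : ∀ q ∈ Ω, q.2 ∈ D → q.1 ≠ x₀ q.2 →
      pdy (psiPole x₀ α ψt) q - pdx (pdx (psiPole x₀ α ψt)) q
        + uPole x₀ ut q * psiPole x₀ α ψt q = 0) :
    ∀ y ∈ D,
      α y * (deriv (deriv x₀) y - 2 * pdx ut (x₀ y, y)) = 0 ∧
      (α y ≠ 0 → deriv (deriv x₀) y = 2 * pdx ut (x₀ y, y)) := by
  intro y hy
  have coeffs (z : ℂ) (hz : z ∈ D) := by
    refine linearEquation_laurent_coeffs_eq_zero (hx₀.differentiableAt (hD.mem_nhds hz))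
      (hα.differentiableAt (hD.mem_nhds hz)) (hut z hz)
      (hψt.eventually_differentiableAt (hΩ.mem_nhds (hgraph z hz))) ?_
    have hslice : ContinuousAt (fun x => (x, z)) (x₀ z) := by fun_prop
    filter_upwards [nhdsWithin_le_nhds (hslice (hΩ.mem_nhds (hgraph z hz))),
      self_mem_nhdsWithin] with x hx hne using heq (x, z) hx hz hne
  obtain ⟨h₀, h₁, h₂⟩ := coeffs y hy
  have h₃ := deriv_leadingCoeff_eq_zero (hx₀.differentiableAt (hD.mem_nhds hy))
    ((hx₀.deriv hD).differentiableAt (hD.mem_nhds hy)) (hα.differentiableAt (hD.mem_nhds hy))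
    (hψt.differentiableAt (hΩ.mem_nhds (hgraph y hy)))
    (eventually_of_mem (hD.mem_nhds hy) fun z hz => (coeffs z hz).1)
  have hmotion : α y * (deriv (deriv x₀) y - 2 * pdx ut (x₀ y, y)) = 0 := by
    linear_combination h₃ - deriv x₀ y * h₁ - 2 * h₂ + ut (x₀ y, y) * h₀
  exact ⟨hmotion, fun hαy => sub_eq_zero.1 ((mul_eq_zero.1 hmotion).resolve_left hαy)⟩

/-- Lemma 3.1 of the paper: if
`ψ = α(y)/(x−x₀(y)) + ψ̃` with `u = 2/(x−x₀(y))² + ũ` solves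
`∂_yψ − ∂_x²ψ + uψ = 0` away from the pole, then with `w = ∂_xũ(x₀(y),y)` one has
`α(x₀'' − 2w) = 0`; in particular `x₀'' = 2w` wherever α ≠ 0. -/
theorem stmt_7 (D : Set ℂ) (hD : IsOpen D)
    (x₀ α : ℂ → ℂ) (hx₀ : DifferentiableOn ℂ x₀ D) (hα : DifferentiableOn ℂ α D)
    (Ω : Set (ℂ × ℂ)) (hΩ : IsOpen Ω)
    (hgraph : ∀ y ∈ D, ((x₀ y, y) : ℂ × ℂ) ∈ Ω)
    (ut ψt : ℂ × ℂ → ℂ)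
    (hut : DifferentiableOn ℂ ut Ω) (hψt : DifferentiableOn ℂ ψt Ω)
    (heq : ∀ q ∈ Ω, q.2 ∈ D → q.1 ≠ x₀ q.2 →
      pdy (psiPole x₀ α ψt) q - pdx (pdx (psiPole x₀ α ψt)) q
        + uPole x₀ ut q * psiPole x₀ α ψt q = 0) :
    ∀ y ∈ D,
      α y * (deriv (deriv x₀) y - 2 * pdx ut (x₀ y, y)) = 0 ∧
      (α y ≠ 0 → deriv (deriv x₀) y = 2 * pdx ut (x₀ y, y)) :=
  stmt_7_general D hD x₀ α hx₀ hα Ω hΩ hgraph ut ψt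
    (fun y hy => differentiableAt_slice_fst (hut.differentiableAt (hΩ.mem_nhds (hgraph y hy))))
    hψt heq
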